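/- Fix an integer f ≥ 1. Let Y be the formal power series in ℂ⟦X⟧ given by Y = -1 + Σ_{k=1}^∞ (-1)^{k(f+1)} · ((k·f + k - 2)! / ((k·f - 1)! · k!)) · X^k. Then X + Y^f + Y^{f+1} = 0 in ℂ⟦X⟧. -/

import Mathlib

noncomputable def auxA (f : ℕ) (k : ℕ) (r : ℂ) : ℂ :=
  match k with
  | 0 => 1
  | k + 1 => r / (Nat.factorial (k + 1) : ℂ) *
      ∏ i ∈ Finset.range k, (r - (k + 1) * f - 1 - i)

lemma auxA_rec (f k : ℕ) (r : ℂ) :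
    auxA f (k + 1) r = auxA f (k + 1) (r - 1) + auxA f k (r - 1 - f) := by
  cases k with
  | zero => simp [auxA]
  | succ m =>
    simp only [auxA]
    rw [Finset.prod_range_succ', Finset.prod_range_succ, Nat.factorial_succ (m + 1)]
    have h1 : ∏ i ∈ Finset.range m, (r - (((m + 1 : ℕ) : ℂ) + 1) * f - 1 - ((i + 1 : ℕ) : ℂ))
        = ∏ i ∈ Finset.range m, (r - 1 - f - ((m : ℂ) + 1) * f - 1 - i) := by
      apply Finset.prod_congr rfl
      intro i _
      push_cast; ring
    have h2 : ∏ i ∈ Finset.range m, (r - 1 - (((m + 1 : ℕ) : ℂ) + 1) * f - 1 - (i : ℂ))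
        = ∏ i ∈ Finset.range m, (r - 1 - f - ((m : ℂ) + 1) * f - 1 - i) := by
      apply Finset.prod_congr rfl
      intro i _
      push_cast; ring
    rw [h1, h2]
    generalize ∏ i ∈ Finset.range m, (r - 1 - f - ((m : ℂ) + 1) * f - 1 - i) = P
    have h3 : ((m + 1).factorial : ℂ) ≠ 0 := by exact_mod_cast Nat.factorial_ne_zero _
    have h4 : (m : ℂ) + 1 + 1 ≠ 0 := by exact_mod_cast Nat.succ_ne_zero (m + 1)
    push_cast
    field_simp
    ring

noncomputable def auxS (f : ℕ) (r : ℤ) : PowerSeries ℂ :=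
  PowerSeries.mk fun k => ((-1 : ℂ) ^ f) ^ k * auxA f k (r : ℂ)

lemma auxS_rec (f : ℕ) (r : ℤ) :
    auxS f r = auxS f (r - 1) +
      PowerSeries.X * (PowerSeries.C ((-1 : ℂ) ^ f) * auxS f (r - 1 - f)) := by
  ext n
  cases n with
  | zero => simp [auxS, auxA]
  | succ n =>
    rw [map_add, PowerSeries.coeff_succ_X_mul, PowerSeries.coeff_C_mul]
    simp only [auxS, PowerSeries.coeff_mk]
    rw [auxA_rec]
    push_cast
    ring

lemma auxS_zero (f : ℕ) : auxS f 0 = 1 := by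
  ext n
  cases n with
  | zero => simp [auxS, auxA]
  | succ n => simp [auxS, auxA, PowerSeries.coeff_one]

lemma auxS_mul (f n : ℕ) : ∀ x y : ℤ, PowerSeries.coeff n (auxS f x * auxS f y) =
    PowerSeries.coeff n (auxS f (x + y)) := by
  induction n with
  | zero => intro x y; simp [auxS, auxA, PowerSeries.coeff_mul]
  | succ n ih =>
    intro x y
    have key : ∀ x : ℤ, PowerSeries.coeff (n + 1) (auxS f x * auxS f y) -
        PowerSeries.coeff (n + 1) (auxS f (x + y)) =
        PowerSeries.coeff (n + 1) (auxS f (x - 1) * auxS f y) -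
        PowerSeries.coeff (n + 1) (auxS f (x - 1 + y)) := by
      intro x
      rw [auxS_rec f x, auxS_rec f (x + y), add_mul, map_add, map_add, mul_assoc, mul_assoc,
        PowerSeries.coeff_succ_X_mul, PowerSeries.coeff_succ_X_mul, PowerSeries.coeff_C_mul,
        PowerSeries.coeff_C_mul, ih]
      rw [show x + y - 1 = x - 1 + y by ring, show x - 1 - f + y = x - 1 + y - f by ring]
      ring
    have z : PowerSeries.coeff (n + 1) (auxS f x * auxS f y) -
        PowerSeries.coeff (n + 1) (auxS f (x + y)) = 0 := by
      induction x using Int.induction_on with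
      | zero => simp [auxS_zero]
      | succ i hi => rw [key]; simpa using hi
      | pred i hi => rw [← key]; exact hi
    exact sub_eq_zero.mp z

lemma auxS_add (f : ℕ) (x y : ℤ) : auxS f (x + y) = auxS f x * auxS f y := by
  ext n; exact (auxS_mul f n x y).symm

lemma auxS_nat (f m : ℕ) : auxS f m = auxS f 1 ^ m := by
  induction m with
  | zero => simp [auxS_zero]
  | succ m ih => push_cast; rw [auxS_add, ih, pow_succ]

lemma aux_prod (N m : ℕ) :
    (N.factorial : ℂ) * ∏ i ∈ Finset.range m, ((N : ℂ) + 1 + i) = ((N + m).factorial : ℂ) := by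
  induction m with
  | zero => simp
  | succ m ih =>
    rw [Finset.prod_range_succ, ← mul_assoc, ih, ← add_assoc, Nat.factorial_succ]
    push_cast; ring

/-- The Lagrange-inversion power series solution `Y(X)` of the framed mirror curve
`X + Y^f + Y^(f+1) = 0` of `ℂ³` around `X = 0`, `Y = -1`, for framing `f ≥ 1`. -/
theorem stmt0 (f : ℕ) (hf : 1 ≤ f)
    (Y : PowerSeries ℂ)
    (hY : Y = PowerSeries.mk fun k => if k = 0 then (-1 : ℂ) else
      (-1 : ℂ) ^ (k * (f + 1)) *
        (Nat.factorial (k * f + k - 2) : ℂ) /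
        ((Nat.factorial (k * f - 1) : ℂ) * (Nat.factorial k : ℂ))) :
    PowerSeries.X + Y ^ f + Y ^ (f + 1) = 0 := by
  have hA : Y = - auxS f 1 := by
    rw [hY]
    ext k
    cases k with
    | zero => simp [auxS, auxA]
    | succ m =>
      simp only [auxS, auxA, PowerSeries.coeff_mk, map_neg, Nat.succ_ne_zero, if_false]
      obtain ⟨N, hN⟩ : ∃ N, (m + 1) * f = N + 1 :=
        ⟨(m + 1) * f - 1, by have : 0 < (m + 1) * f := by positivity
                             omega⟩
      have hN' : ((m : ℂ) + 1) * f = N + 1 := by exact_mod_cast hN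
      rw [show (m + 1) * f + (m + 1) - 2 = N + m by omega,
        show (m + 1) * f - 1 = N by omega, ← aux_prod]
      have hp : ∏ i ∈ Finset.range m, (((1 : ℤ) : ℂ) - ((m : ℂ) + 1) * f - 1 - i) =
          (-1) ^ m * ∏ i ∈ Finset.range m, ((N : ℂ) + 1 + i) := by
        rw [hN', ← Finset.card_range m, ← Finset.prod_const, Finset.card_range,
          ← Finset.prod_mul_distrib]
        apply Finset.prod_congr rfl
        intro i _
        push_cast; ring
      rw [hp]
      have h1 : (N.factorial : ℂ) ≠ 0 := by exact_mod_cast Nat.factorial_ne_zero _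
      have h2 : ((m + 1).factorial : ℂ) ≠ 0 := by exact_mod_cast Nat.factorial_ne_zero _
      push_cast
      field_simp
      ring
  have h1 := auxS_rec f 1
  rw [show (1 : ℤ) - 1 = 0 by ring, auxS_zero, zero_sub] at h1
  have h2 : auxS f (-(f : ℤ)) * auxS f 1 ^ f = 1 := by
    rw [← auxS_nat, ← auxS_add, neg_add_cancel, auxS_zero]
  have hC : (PowerSeries.C ((-1 : ℂ) ^ f)) = (-1 : PowerSeries ℂ) ^ f := by simp
  rw [hC] at h1
  have he : ((-1 : PowerSeries ℂ) ^ f) * (-1) ^ f = 1 := by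
    rw [← mul_pow]; simp
  rw [hA, neg_pow (auxS f 1) f, neg_pow (auxS f 1) (f + 1)]
  generalize auxS f 1 = U at *
  generalize auxS f (-(f : ℤ)) = V at *
  rw [pow_succ, pow_succ]
  generalize (-1 : PowerSeries ℂ) ^ f = e at *
  generalize U ^ f = W at *
  linear_combination (-e * W) * h1 - PowerSeries.X * e * e * h2 - PowerSeries.X * he
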